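/- Let T be a scalar Calderón–Zygmund operator on ℝ^d with modulus of continuity ω satisfying the Dini condition, let ρ ∈ (2,∞), assume V_ρ(T_*) is bounded on L^q(ℝ^d) for some q ∈ (1,∞), and let r ∈ (1, min{q,ρ}). Then there is a constant C, independent of the cube Q₀, such that for every f ∈ L^q(ℝ^d) and a.e. x ∈ Q₀, M_{V_ρ(T_*),Q₀} f(x) ≤ C [M(|f|^r)(x)]^{1/r} + V_ρ(T_* f)(x), where M is the Hardy–Littlewood maximal operator over cubes. -/

import Mathlib

open MeasureTheory Set Filter Classical
open scoped ENNReal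
noncomputable section

abbrev Rd (d : ℕ) := EuclideanSpace ℝ (Fin d)

/-- An axis-parallel (half-open) cube in `ℝ^d`, given by its center and side length. -/
structure Cube (d : ℕ) where
  c : Fin d → ℝ
  l : ℝ
  hl : 0 < l

/-- The underlying (half-open) set of a cube. -/
def Cube.set {d : ℕ} (Q : Cube d) : Set (Rd d) :=
  {y | ∀ i, Q.c i - Q.l / 2 ≤ y i ∧ y i < Q.c i + Q.l / 2}

/-- The (half-open) set `tQ`, the cube concentric with `Q` of side length `t·ℓ(Q)`. -/
def Cube.dilate {d : ℕ} (Q : Cube d) (t : ℝ) : Set (Rd d) :=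
  {y | ∀ i, Q.c i - t * Q.l / 2 ≤ y i ∧ y i < Q.c i + t * Q.l / 2}

/-- The volume `|Q| = ℓ(Q)^d` of a cube, as an extended nonnegative real. -/
def Cube.vol {d : ℕ} (Q : Cube d) : ℝ≥0∞ := ENNReal.ofReal (Q.l ^ d)

/-- `Q` is one of the dyadic subcubes of `Q₀` obtained by repeated subdivision of `Q₀`
into `2^d` congruent subcubes. -/
def IsDyadicSubcube {d : ℕ} (Q₀ Q : Cube d) : Prop :=
  ∃ (k : ℕ) (m : Fin d → ℕ), (∀ i, m i < 2 ^ k) ∧ Q.l = Q₀.l / 2 ^ k ∧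
    ∀ i, Q.c i = Q₀.c i - Q₀.l / 2 + ((m i : ℝ) + 1 / 2) * (Q₀.l / 2 ^ k)
/-- A scalar Calderón–Zygmund operator on `ℝ^d` with Dini modulus of continuity:
a linear operator `T` bounded on `L²(ℝ^d)` associated with a kernel `K` satisfying the
size condition and the `ω`-smoothness condition, where `ω` is increasing, subadditive,
vanishes at `0`, and satisfies the Dini condition `∫₀¹ ω(t) dt/t < ∞`. -/
structure CZO (d : ℕ) where
  K : Rd d → Rd d → ℝ
  measK : Measurable (Function.uncurry K)
  ω : ℝ → ℝ
  Cst : ℝ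
  hCst : 0 < Cst
  ω_mono : MonotoneOn ω (Set.Ici 0)
  ω_zero : ω 0 = 0
  ω_subadd : ∀ s t : ℝ, 0 ≤ s → 0 ≤ t → ω (s + t) ≤ ω s + ω t
  dini : IntegrableOn (fun t => ω t / t) (Set.Ioo (0 : ℝ) 1)
  size : ∀ x y : Rd d, x ≠ y → |K x y| ≤ Cst / dist x y ^ d
  smooth : ∀ x x' y : Rd d, x ≠ y → dist x x' ≤ dist x y / 2 →
    |K x y - K x' y| + |K y x - K y x'| ≤ Cst * ω (dist x x' / dist x y) / dist x y ^ d
  T : Lp ℝ 2 (volume : Measure (Rd d)) →L[ℝ] Lp ℝ 2 (volume : Measure (Rd d))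
  assoc : ∀ f : Lp ℝ 2 (volume : Measure (Rd d)),
    ∀ᵐ x ∂(volume : Measure (Rd d)), x ∉ tsupport (f : Rd d → ℝ) →
      (T f : Rd d → ℝ) x = ∫ y, K x y * f y

/-- The truncated singular integral `T_ε f(x) = ∫_{|x-y|>ε} K(x,y) f(y) dy`. -/
def CZO.trunc {d : ℕ} (S : CZO d) (ε : ℝ) (f : Rd d → ℝ) (x : Rd d) : ℝ :=
  ∫ y in {y : Rd d | ε < dist x y}, S.K x y * f y

/-- The variation operator `V_ρ(T_* f)(x)`, with values in `[0,∞]`: the supremum over all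
strictly decreasing positive sequences `ε_i → 0` of `(Σ_i |T_{ε_{i+1}}f(x) - T_{ε_i}f(x)|^ρ)^{1/ρ}`. -/
def CZO.var {d : ℕ} (S : CZO d) (ρ : ℝ) (f : Rd d → ℝ) (x : Rd d) : ℝ≥0∞ :=
  ⨆ (ε : ℕ → ℝ) (_ : StrictAnti ε ∧ (∀ i, 0 < ε i) ∧ Tendsto ε atTop (nhds 0)),
    (∑' i : ℕ, ENNReal.ofReal |S.trunc (ε (i + 1)) f x - S.trunc (ε i) f x| ^ ρ) ^ (1 / ρ)

/-- `V_ρ(T_*)` is bounded on `L^q(ℝ^d)`. -/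
def CZO.VarBdd {d : ℕ} (S : CZO d) (ρ q : ℝ) : Prop :=
  ∃ A : ℝ, 0 < A ∧ ∀ f : Rd d → ℝ, Measurable f →
    ∫⁻ x, S.var ρ f x ^ q ∂volume ≤ ENNReal.ofReal A * ∫⁻ x, ENNReal.ofReal |f x| ^ q ∂volume

/-- The weak `(1,1)` operator (quasi-)norm `‖V_ρ(T_*)‖_{L¹ → L^{1,∞}}`. -/
def CZO.weak11Norm {d : ℕ} (S : CZO d) (ρ : ℝ) : ℝ≥0∞ :=
  sInf {A : ℝ≥0∞ | ∀ f : Rd d → ℝ, Measurable f → ∀ t : ℝ, 0 < t →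
    ENNReal.ofReal t * volume {x | ENNReal.ofReal t < S.var ρ f x} ≤
      A * ∫⁻ x, ENNReal.ofReal |f x| ∂volume}

/-- The local grand maximal truncated operator `M_{V_ρ(T_*),Q₀}`. -/
def CZO.grandMaxLoc {d : ℕ} (S : CZO d) (ρ : ℝ) (Q₀ : Cube d) (f : Rd d → ℝ) (x : Rd d) : ℝ≥0∞ :=
  if x ∈ Q₀.set then
    ⨆ (Q : Cube d) (_ : x ∈ Q.set ∧ Q.set ⊆ Q₀.set),
      essSup (fun ξ => S.var ρ ((Q₀.dilate 3 \ Q.dilate 3).indicator f) ξ)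
        (volume.restrict Q.set)
  else 0

/-- The (global) grand maximal truncated operator `M_{V_ρ(T_*)}`. -/
def CZO.grandMax {d : ℕ} (S : CZO d) (ρ : ℝ) (f : Rd d → ℝ) (x : Rd d) : ℝ≥0∞ :=
  ⨆ (Q : Cube d) (_ : x ∈ Q.set),
    essSup (fun ξ => S.var ρ (((Q.dilate 3)ᶜ).indicator f) ξ) (volume.restrict Q.set)

/-- The Hardy–Littlewood maximal operator over cubes, with values in `[0,∞]`. -/
def maxCube {d : ℕ} (f : Rd d → ℝ) (x : Rd d) : ℝ≥0∞ :=
  ⨆ (Q : Cube d) (_ : x ∈ Q.set), Q.vol⁻¹ * ∫⁻ y in Q.set, ENNReal.ofReal |f y|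

/-- The average `⟨|f|⟩_{3Q} = (1/|3Q|) ∫_{3Q} |f|`. -/
def avg3 {d : ℕ} (Q : Cube d) (f : Rd d → ℝ) : ℝ :=
  (∫ y in Q.dilate 3, |f y|) / (3 * Q.l) ^ d
/-- The Euclidean norm of a vector in `ℝ^n`. -/
def enorm' {n : ℕ} (v : Fin n → ℝ) : ℝ := Real.sqrt (∑ i, v i ^ 2)

/-- The operator norm (with respect to Euclidean norms) of an `n × n` real matrix. -/
def matOpNorm {n : ℕ} (A : Matrix (Fin n) (Fin n) ℝ) : ℝ :=
  sSup ((fun v => enorm' (A.mulVec v)) '' {v | enorm' v ≤ 1})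

/-- The spectral power `A^s` of a symmetric matrix `A = U D Uᵗ`, defined as `U D^s Uᵗ`
(junk value `A` if `A` is not symmetric). -/
def Matrix.rpowH {n : ℕ} (A : Matrix (Fin n) (Fin n) ℝ) (s : ℝ) : Matrix (Fin n) (Fin n) ℝ :=
  if h : A.IsHermitian then
    (h.eigenvectorUnitary : Matrix (Fin n) (Fin n) ℝ) *
      Matrix.diagonal (fun i => h.eigenvalues i ^ s) *
      star (h.eigenvectorUnitary : Matrix (Fin n) (Fin n) ℝ)
  else A

/-- A matrix weight on `ℝ^d`: a measurable function with a.e. symmetric positive definite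
values whose operator norm is locally integrable. -/
structure MatrixWeight (d n : ℕ) where
  W : Rd d → Matrix (Fin n) (Fin n) ℝ
  meas : ∀ i j, Measurable fun x => W x i j
  pd : ∀ᵐ x : Rd d, (W x).PosDef
  locInt : LocallyIntegrable (fun x => matOpNorm (W x)) (volume : Measure (Rd d))

/-- The matrix `A_p` characteristic `[W]_{A_p}`. -/
def MatrixWeight.apConst {d n : ℕ} (W : MatrixWeight d n) (p : ℝ) : ℝ≥0∞ :=
  ⨆ Q : Cube d, Q.vol⁻¹ * ∫⁻ x in Q.set,
    (Q.vol⁻¹ * ∫⁻ t in Q.set,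
        ENNReal.ofReal (matOpNorm ((W.W x).rpowH (1 / p) * (W.W t).rpowH (-(1 / p))))
          ^ (p / (p - 1))) ^ (p - 1)

/-- The norm of `f` in `L^p(W)`. -/
def MatrixWeight.wNorm {d n : ℕ} (W : MatrixWeight d n) (p : ℝ)
    (f : Rd d → Fin n → ℝ) : ℝ≥0∞ :=
  (∫⁻ x, ENNReal.ofReal (enorm' (((W.W x).rpowH (1 / p)).mulVec (f x))) ^ p) ^ (1 / p)

/-- The Euclidean length `|V_ρ(T_{n,*} f⃗)(x)|` of the componentwise variation vector
(with values in `[0,∞]`). -/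
def CZO.varVecNorm {d : ℕ} (n : ℕ) (S : CZO d) (ρ : ℝ) (f : Rd d → Fin n → ℝ)
    (x : Rd d) : ℝ≥0∞ :=
  (∑ j : Fin n, S.var ρ (fun y => f y j) x ^ (2 : ℝ)) ^ ((1 : ℝ) / 2)

/-- An `η`-sparse family of cubes. -/
def IsSparse {d : ℕ} (η : ℝ) (F : Set (Cube d)) : Prop :=
  ∃ E : Cube d → Set (Rd d),
    (∀ Q ∈ F, E Q ⊆ Q.set ∧ MeasurableSet (E Q) ∧ ENNReal.ofReal η * Q.vol ≤ volume (E Q)) ∧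
    F.PairwiseDisjoint E

/-- The convex body average `⟨⟨f⃗⟩⟩_{tQ}` of a vector-valued function over the cube `tQ`. -/
def convexBodyAvg {d n : ℕ} (f : Rd d → Fin n → ℝ) (Q : Cube d) (t : ℝ) :
    Set (Fin n → ℝ) :=
  {v | ∃ φ : Rd d → ℝ, Measurable φ ∧ (∀ y, |φ y| ≤ 1) ∧
    ∀ j, v j = (∫ y in Q.dilate t, φ y * f y j) / (t * Q.l) ^ d}

/-!
Fix `x, ξ ∈ Q ⊆ Q₀`, and let `H = 3Q₀ \ 3Q`. Each increment of the truncations of `f 1_H` at `ξ` is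
an integral of `K(ξ, ·) f` over the part in `H` of an annulus centred at `ξ`. Comparing it with the
integral of `K(x, ·) f` over the annulus of the same radii centred at `x`, cut down to a shell
`G = {R < |x - y| ≤ ℓ(Q₀)} ⊆ H` with `R ≈ ℓ(Q)`, leaves three errors:

* the integral over `H \ G`, which lies at distance `≲ ℓ(Q)` or `≈ ℓ(Q₀)` from `x`; the size of the
  kernel bounds it by averages of `|f|`;
* the integral of `|K(ξ, ·) - K(x, ·)| |f|`, bounded by averages of `|f|` and the Dini condition;
* the integrals over the symmetric differences of the two annuli.

The first two are summed in `ℓ¹`. The symmetric differences are contained in thin shells of width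
`≲ ℓ(Q)`, so Hölder's inequality with exponent `r > 1` gains a power of the ratio of width to
radius; this makes their `ℓ^r` norm, hence their `ℓ^ρ` norm, finite. The main terms are increments
of truncations of `f` at `x`, with radii clamped to `[R, ℓ(Q₀)]`, so they contribute at most
`V_ρ(T_* f)(x)`.
-/

open Metric
open scoped symmDiff

section ExponentInequalities

variable {ι α : Type*}

lemma rpow_tsum_rpow_le_of_exponent_le (a : ι → ℝ≥0∞) {s p : ℝ} (hs : 0 < s) (hsp : s ≤ p) :
    (∑' i, a i ^ p) ^ (1 / p) ≤ (∑' i, a i ^ s) ^ (1 / s) := by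
  have hp : 0 < p := hs.trans_le hsp
  set N := (∑' i, a i ^ s) ^ (1 / s) with hN
  have hNs : N ^ s = ∑' i, a i ^ s := by
    rw [hN, ← ENNReal.rpow_mul, one_div_mul_cancel hs.ne', ENNReal.rpow_one]
  have ha_le (i : ι) : a i ≤ N := by
    rw [← ENNReal.rpow_le_rpow_iff hs, hNs]
    exact ENNReal.le_tsum i
  have hsplit (c : ℝ≥0∞) : c ^ p = c ^ (p - s) * c ^ s := by
    rw [← ENNReal.rpow_add_of_nonneg _ _ (sub_nonneg.2 hsp) hs.le, sub_add_cancel]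
  rw [one_div, ENNReal.rpow_inv_le_iff hp]
  calc ∑' i, a i ^ p = ∑' i, a i ^ (p - s) * a i ^ s := tsum_congr fun i => hsplit (a i)
    _ ≤ ∑' i, N ^ (p - s) * a i ^ s := by gcongr with i; exact ha_le i
    _ = N ^ p := by rw [ENNReal.tsum_mul_left, ← hNs, ← hsplit]

lemma rpow_tsum_add_rpow_le [Countable ι] (a b : ι → ℝ≥0∞) {p : ℝ} (hp : 1 ≤ p) :
    (∑' i, (a i + b i) ^ p) ^ (1 / p) ≤
      (∑' i, a i ^ p) ^ (1 / p) + (∑' i, b i ^ p) ^ (1 / p) := by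
  let _ : MeasurableSpace ι := ⊤
  simpa [lintegral_count] using ENNReal.lintegral_Lp_add_le (μ := Measure.count) (f := a) (g := b)
    (measurable_of_countable _).aemeasurable (measurable_of_countable _).aemeasurable hp

lemma rpow_tsum_rpow_le_add_add [Countable ι] {u v a b : ι → ℝ≥0∞} {r p : ℝ} (hr : 1 ≤ r)
    (hrp : r ≤ p) (h : ∀ i, u i ≤ v i + (a i + b i)) :
    (∑' i, u i ^ p) ^ (1 / p) ≤
      (∑' i, v i ^ p) ^ (1 / p) + ((∑' i, a i) + (∑' i, b i ^ r) ^ (1 / r)) := by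
  have hp : 1 ≤ p := hr.trans hrp
  have ha : (∑' i, a i ^ p) ^ (1 / p) ≤ ∑' i, a i := by
    simpa using rpow_tsum_rpow_le_of_exponent_le a one_pos hp
  have hb := rpow_tsum_rpow_le_of_exponent_le b (one_pos.trans_le hr) hrp
  calc (∑' i, u i ^ p) ^ (1 / p)
      ≤ (∑' i, (v i + (a i + b i)) ^ p) ^ (1 / p) := by gcongr with i; exact h i
    _ ≤ (∑' i, v i ^ p) ^ (1 / p) + (∑' i, (a i + b i) ^ p) ^ (1 / p) :=
        rpow_tsum_add_rpow_le _ _ hp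
    _ ≤ _ := by gcongr; exact (rpow_tsum_add_rpow_le _ _ hp).trans (add_le_add ha hb)

lemma rpow_lintegral_le_weighted [MeasurableSpace α] {μ : Measure α} {u φ : α → ℝ≥0∞} {r : ℝ}
    (hr : 1 < r) (hu : AEMeasurable u μ) (hφ : AEMeasurable φ μ) (hu₀ : ∀ᵐ y ∂μ, u y ≠ 0)
    (hu_top : ∀ᵐ y ∂μ, u y ≠ ⊤) :
    (∫⁻ y, φ y ∂μ) ^ r ≤ (∫⁻ y, u y ∂μ) ^ (r - 1) * ∫⁻ y, u y ^ (1 - r) * φ y ^ r ∂μ := by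
  have hr₀ : 0 < r := one_pos.trans hr
  have hconj : r.HolderConjugate (r / (r - 1)) := .conjExponent hr
  set r' := r / (r - 1) with hr'
  have hr'₀ : r' ≠ 0 := hconj.symm.pos.ne'
  have hr1 : r - 1 ≠ 0 := (sub_pos.2 hr).ne'
  have hφ_split : ∀ᵐ y ∂μ, φ y = u y ^ (-1 / r') * φ y * u y ^ (1 / r') := by
    filter_upwards [hu₀, hu_top] with y hy₀ hy_top
    rw [mul_right_comm, ← ENNReal.rpow_add _ _ hy₀ hy_top, neg_div, neg_add_cancel,
      ENNReal.rpow_zero, one_mul]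
  calc (∫⁻ y, φ y ∂μ) ^ r
      = (∫⁻ y, u y ^ (-1 / r') * φ y * u y ^ (1 / r') ∂μ) ^ r := by
        rw [lintegral_congr_ae hφ_split]
    _ ≤ ((∫⁻ y, (u y ^ (-1 / r') * φ y) ^ r ∂μ) ^ (1 / r) *
          (∫⁻ y, (u y ^ (1 / r')) ^ r' ∂μ) ^ (1 / r')) ^ r := by
        gcongr
        exact ENNReal.lintegral_mul_le_Lp_mul_Lq μ hconj
          ((hu.pow_const _).mul hφ) (hu.pow_const _)
    _ = (∫⁻ y, u y ^ (1 - r) * φ y ^ r ∂μ) * (∫⁻ y, u y ∂μ) ^ (r - 1) := by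
        have he : -1 / r' * r = 1 - r := by rw [hr']; field_simp; ring
        have he' : 1 / r' * r = r - 1 := by rw [hr']; field_simp
        simp only [ENNReal.mul_rpow_of_nonneg _ _ hr₀.le, ← ENNReal.rpow_mul, he, he',
          one_div_mul_cancel hr₀.ne', one_div_mul_cancel hr'₀, ENNReal.rpow_one]
    _ = _ := mul_comm _ _

end ExponentInequalities

section SetIntegral

variable {α E : Type*} [MeasurableSpace α] {μ : Measure α} [NormedAddCommGroup E] [NormedSpace ℝ E]

lemma enorm_setIntegral_sub_setIntegral_le {h : α → E} {A B : Set α} (hA : MeasurableSet A)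
    (hB : MeasurableSet B) (hhA : IntegrableOn h A μ) (hhB : IntegrableOn h B μ) :
    ‖(∫ y in A, h y ∂μ) - ∫ y in B, h y ∂μ‖ₑ ≤ ∫⁻ y in A ∆ B, ‖h y‖ₑ ∂μ := by
  rw [← integral_indicator hA, ← integral_indicator hB,
    ← integral_sub (hhA.integrable_indicator hA) (hhB.integrable_indicator hB),
    ← lintegral_indicator (hA.symmDiff hB)]
  refine (enorm_integral_le_lintegral_enorm _).trans_eq (lintegral_congr fun y => ?_)
  rw [← Set.apply_indicator_symmDiff enorm_neg, ← enorm_indicator_eq_indicator_enorm]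

lemma enorm_setIntegral_inter_le {k l : α → E} {A B G H : Set α} (hA : MeasurableSet A)
    (hB : MeasurableSet B) (hG : MeasurableSet G) (hH : MeasurableSet H) (hGH : G ⊆ H)
    (hkA : IntegrableOn k A μ) (hkG : IntegrableOn k G μ) (hlB : IntegrableOn l B μ) :
    ‖∫ y in A ∩ H, k y ∂μ‖ₑ ≤ ‖∫ y in B ∩ G, l y ∂μ‖ₑ +
      ((∫⁻ y in A ∩ (H \ G), ‖k y‖ₑ ∂μ) + (∫⁻ y in B ∩ G, ‖k y - l y‖ₑ ∂μ) +
        ∫⁻ y in G ∩ A ∆ B, ‖k y‖ₑ ∂μ) := by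
  have hfar : ∫ y in A ∩ H, k y ∂μ = (∫ y in A ∩ G, k y ∂μ) + ∫ y in A ∩ (H \ G), k y ∂μ := by
    rw [← setIntegral_union (by grind) (hA.inter (hH.diff hG))
      (hkA.mono_set inter_subset_left) (hkA.mono_set inter_subset_left), ← inter_union_distrib_left,
      union_sdiff_cancel hGH]
  have hcross := enorm_setIntegral_sub_setIntegral_le (hA.inter hG) (hB.inter hG)
    (hkA.mono_set inter_subset_left) (hkG.mono_set inter_subset_right)
  have hsymm : (A ∩ G) ∆ (B ∩ G) = G ∩ A ∆ B := by grind
  have hkernel : ‖(∫ y in B ∩ G, k y ∂μ) - ∫ y in B ∩ G, l y ∂μ‖ₑ ≤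
      ∫⁻ y in B ∩ G, ‖k y - l y‖ₑ ∂μ := by
    rw [← integral_sub (hkG.mono_set inter_subset_right) (hlB.mono_set inter_subset_left)]
    exact enorm_integral_le_lintegral_enorm _
  rw [hsymm] at hcross
  calc ‖∫ y in A ∩ H, k y ∂μ‖ₑ
      = ‖(∫ y in B ∩ G, l y ∂μ) + ((∫ y in A ∩ (H \ G), k y ∂μ) +
          ((∫ y in B ∩ G, k y ∂μ) - ∫ y in B ∩ G, l y ∂μ) +
          ((∫ y in A ∩ G, k y ∂μ) - ∫ y in B ∩ G, k y ∂μ))‖ₑ := by rw [hfar]; congr 1; abel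
    _ ≤ _ := (enorm_add_le _ _).trans (add_le_add_right ((enorm_add_le _ _).trans (add_le_add
        ((enorm_add_le _ _).trans (add_le_add (enorm_integral_le_lintegral_enorm _) hkernel))
        hcross)) _)

end SetIntegral

section Shells

variable {X : Type*} [PseudoMetricSpace X] {x : X} {b s R : ℝ} {m : ℝ≥0∞}

/-- The half-open annulus `{y | a < |z - y| ≤ b}`, on which the difference
`T_a f(z) - T_b f(z)` of two truncations is an integral. -/
def shell (z : X) (a b : ℝ) : Set X := {y | a < dist z y ∧ dist z y ≤ b}

lemma symmDiff_shell_subset (x ξ : X) (a b : ℝ) :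
    shell ξ a b ∆ shell x a b ⊆
      {y | |dist x y - a| ≤ dist x ξ} ∪ {y | |dist x y - b| ≤ dist x ξ} := by
  intro y hy
  have hξ : |dist x y - dist ξ y| ≤ dist x ξ := abs_dist_sub_le x ξ y
  simp only [Set.mem_symmDiff, shell, mem_ofPred_eq, mem_union, abs_le] at hy hξ ⊢
  grind

lemma lt_dist_subset_iUnion_dyadic (hR : 0 < R) :
    {y | R < dist x y} ⊆
      ⋃ k : ℕ, {y | 2 ^ k * R ≤ dist x y} ∩ closedBall x (2 ^ (k + 1) * R) := by
  intro y (hy : R < dist x y)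
  obtain ⟨k, hle, hlt⟩ := exists_nat_pow_near ((one_le_div₀ hR).2 hy.le) one_lt_two
  rw [le_div_iff₀ hR] at hle
  rw [div_lt_iff₀ hR] at hlt
  exact mem_iUnion.2 ⟨k, hle, by simpa [dist_comm] using hlt.le⟩

variable [MeasurableSpace X] {μ : Measure X} {F : X → ℝ≥0∞}

/-- The integrals of `F` over the balls around `x` grow at most like the `s`-th power of the
radius, with constant `m`. For `F = |f|` and `s = d` this is, up to a dimensional factor, the
statement that the maximal function of `f` at `x` is at most `m`. -/
def BallGrowth (μ : Measure X) (F : X → ℝ≥0∞) (x : X) (s : ℝ) (m : ℝ≥0∞) : Prop :=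
  ∀ t : ℝ, 0 < t → ∫⁻ y in closedBall x t, F y ∂μ ≤ ENNReal.ofReal t ^ s * m

lemma BallGrowth.of_rpow {r : ℝ} {v : ℝ≥0∞} (hr : 1 < r) (hF : AEMeasurable F μ)
    (hone : BallGrowth μ (fun _ => 1) x s v) (hFr : BallGrowth μ (fun y => F y ^ r) x s m) :
    BallGrowth μ F x s ((v ^ (r - 1) * m) ^ (1 / r)) := by
  intro t ht
  have hr₀ : 0 < r := one_pos.trans hr
  set T := ENNReal.ofReal t ^ s
  rw [← ENNReal.rpow_le_rpow_iff hr₀]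
  calc (∫⁻ y in closedBall x t, F y ∂μ) ^ r
      ≤ (∫⁻ _ in closedBall x t, 1 ∂μ) ^ (r - 1) * ∫⁻ y in closedBall x t, F y ^ r ∂μ := by
        simpa using rpow_lintegral_le_weighted (μ := μ.restrict (closedBall x t))
          (u := fun _ => 1) hr aemeasurable_const hF.restrict (by simp) (by simp)
    _ ≤ (T * v) ^ (r - 1) * (T * m) :=
        mul_le_mul' (ENNReal.rpow_le_rpow (hone t ht) (by linarith)) (hFr t ht)
    _ = T ^ (r - 1) * T ^ (1 : ℝ) * (v ^ (r - 1) * m) := by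
        rw [ENNReal.mul_rpow_of_nonneg _ _ (by linarith), ENNReal.rpow_one]; ring
    _ = T ^ r * (v ^ (r - 1) * m) := by
        rw [← ENNReal.rpow_add_of_nonneg _ _ (by linarith) zero_le_one, sub_add_cancel]
    _ = _ := by
        rw [ENNReal.mul_rpow_of_nonneg _ _ hr₀.le, one_div, ENNReal.rpow_inv_rpow hr₀.ne']

variable [OpensMeasurableSpace X]

lemma measurableSet_shell (z : X) (a b : ℝ) : MeasurableSet (shell z a b) :=
  (by fun_prop : Measurable (dist z)) measurableSet_Ioc

lemma measurableSet_lt_dist (z : X) (a : ℝ) : MeasurableSet {y | a < dist z y} :=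
  (by fun_prop : Measurable (dist z)) measurableSet_Ioi

lemma tsum_setLIntegral_shell_inter_le (μ : Measure X) (z : X) {ε : ℕ → ℝ} (hε : Antitone ε)
    {E : Set X} (hE : MeasurableSet E) (h : X → ℝ≥0∞) :
    ∑' i, ∫⁻ y in shell z (ε (i + 1)) (ε i) ∩ E, h y ∂μ ≤ ∫⁻ y in E, h y ∂μ := by
  have hdisj : Pairwise (Function.onFun Disjoint fun i => shell z (ε (i + 1)) (ε i) ∩ E) :=
    fun i j hij => ((hε.pairwise_disjoint_on_Ioc_succ hij).preimage (dist z)).mono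
      inter_subset_left inter_subset_left
  rw [← lintegral_iUnion (fun i => (measurableSet_shell z _ _).inter hE) hdisj]
  exact lintegral_mono_set (iUnion_subset fun _ => inter_subset_right)

lemma BallGrowth.setLIntegral_mul_le_tsum (hF : BallGrowth μ F x s m) (hR : 0 < R)
    {w : X → ℝ≥0∞} {W : ℕ → ℝ≥0∞} (hW : ∀ k, W k ≠ ⊤)
    (hw : ∀ k y, 2 ^ k * R ≤ dist x y → w y ≤ W k) :
    ∫⁻ y in {y | R < dist x y}, w y * F y ∂μ ≤
      ∑' k, W k * (ENNReal.ofReal (2 ^ (k + 1) * R) ^ s * m) := by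
  have hmeas (k : ℕ) :
      MeasurableSet ({y | 2 ^ k * R ≤ dist x y} ∩ closedBall x (2 ^ (k + 1) * R)) :=
    ((by fun_prop : Measurable (dist x)) measurableSet_Ici).inter measurableSet_closedBall
  refine (lintegral_mono_set (lt_dist_subset_iUnion_dyadic hR)).trans
    ((lintegral_iUnion_le _ _).trans (ENNReal.tsum_le_tsum fun k => ?_))
  calc ∫⁻ y in {y | 2 ^ k * R ≤ dist x y} ∩ closedBall x (2 ^ (k + 1) * R), w y * F y ∂μ
      ≤ ∫⁻ y in {y | 2 ^ k * R ≤ dist x y} ∩ closedBall x (2 ^ (k + 1) * R), W k * F y ∂μ :=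
        setLIntegral_mono' (hmeas k) fun y hy => by gcongr; exact hw k y hy.1
    _ ≤ ∫⁻ y in closedBall x (2 ^ (k + 1) * R), W k * F y ∂μ :=
        lintegral_mono_set inter_subset_right
    _ = W k * ∫⁻ y in closedBall x (2 ^ (k + 1) * R), F y ∂μ := lintegral_const_mul' _ _ (hW k)
    _ ≤ _ := by gcongr; exact hF _ (by positivity)

lemma BallGrowth.setLIntegral_edist_rpow_neg_mul_le (hF : BallGrowth μ F x s m) (hR : 0 < R)
    (hb : 0 ≤ b) :
    ∫⁻ y in {y | R < dist x y}, edist x y ^ (-b) * F y ∂μ ≤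
      2 ^ s * (1 - 2 ^ (s - b))⁻¹ * ENNReal.ofReal R ^ (s - b) * m := by
  have hR_top : ENNReal.ofReal R ≠ ⊤ := ENNReal.ofReal_ne_top
  have hdyadic (k : ℕ) : ENNReal.ofReal (2 ^ k * R) = 2 ^ k * ENNReal.ofReal R := by
    rw [ENNReal.ofReal_mul (by positivity), ENNReal.ofReal_pow (by norm_num)]; simp
  have hterm (k : ℕ) : (2 ^ k * ENNReal.ofReal R) ^ (-b) *
      (ENNReal.ofReal (2 ^ (k + 1) * R) ^ s * m) =
        2 ^ s * ENNReal.ofReal R ^ (s - b) * m * (2 ^ (s - b)) ^ k := by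
    have hk₀ : 2 ^ k * ENNReal.ofReal R ≠ 0 := by simp [hR]
    have hk_top : 2 ^ k * ENNReal.ofReal R ≠ ⊤ := by finiteness
    calc _ = 2 ^ s * ((2 ^ k * ENNReal.ofReal R) ^ s * (2 ^ k * ENNReal.ofReal R) ^ (-b)) * m := by
          rw [hdyadic, pow_succ', mul_assoc 2, ENNReal.mul_rpow_of_ne_top (by simp) hk_top]; ring
      _ = 2 ^ s * (2 ^ k * ENNReal.ofReal R) ^ (s - b) * m := by
          rw [← ENNReal.rpow_add _ _ hk₀ hk_top, ← sub_eq_add_neg]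
      _ = _ := by
          rw [ENNReal.mul_rpow_of_ne_top (by finiteness) hR_top, ← ENNReal.rpow_natCast,
            ← ENNReal.rpow_mul, mul_comm (k : ℝ), ENNReal.rpow_mul, ENNReal.rpow_natCast]
          ring
  calc _ ≤ ∑' k : ℕ, (2 ^ k * ENNReal.ofReal R) ^ (-b) *
          (ENNReal.ofReal (2 ^ (k + 1) * R) ^ s * m) := by
        refine hF.setLIntegral_mul_le_tsum hR (fun k => ?_) fun k y hy => ?_
        · exact ENNReal.rpow_ne_top_of_ne_zero (by simp [hR]) (by finiteness)
        · rw [ENNReal.rpow_neg, ENNReal.rpow_neg, ENNReal.inv_le_inv, edist_dist, ← hdyadic]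
          gcongr
    _ = _ := by
        simp_rw [hterm]
        rw [ENNReal.tsum_mul_left, ENNReal.tsum_geometric]
        ring

end Shells

section DiniSum

variable {w : ℝ → ℝ}

lemma ofReal_le_two_mul_setLIntegral_div (hw : MonotoneOn w (Ici 0)) {c : ℝ} (hc : 0 < c) :
    ENNReal.ofReal (w c) ≤ 2 * ∫⁻ t in Ioo c (2 * c), ENNReal.ofReal (w t / t) := by
  rcases le_total (w c) 0 with hwc | hwc
  · simp [ENNReal.ofReal_of_nonpos hwc]
  calc ENNReal.ofReal (w c)
      = 2 * ∫⁻ _ in Ioo c (2 * c), ENNReal.ofReal (w c / (2 * c)) := by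
        rw [setLIntegral_const, Real.volume_Ioo, ← ENNReal.ofReal_mul (by positivity),
          ← ENNReal.ofReal_ofNat 2, ← ENNReal.ofReal_mul zero_le_two]
        congr 1
        field_simp
        ring
    _ ≤ 2 * ∫⁻ t in Ioo c (2 * c), ENNReal.ofReal (w t / t) := by
        gcongr 2 * ?_
        refine setLIntegral_mono' measurableSet_Ioo fun t ht => ENNReal.ofReal_le_ofReal ?_
        have ht₀ : 0 < t := hc.trans ht.1
        have hwt : w c ≤ w t := hw hc.le ht₀.le ht.1.le
        exact div_le_div₀ (hwc.trans hwt) hwt ht₀ ht.2.le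

lemma tsum_ofReal_dyadic_le_setLIntegral_div (hw : MonotoneOn w (Ici 0)) :
    ∑' k : ℕ, ENNReal.ofReal (w (2⁻¹ ^ (k + 1))) ≤
      2 * ∫⁻ t in Ioo (0 : ℝ) 1, ENNReal.ofReal (w t / t) := by
  have hanti : Antitone fun k : ℕ => (2 : ℝ)⁻¹ ^ k :=
    fun _ _ h => pow_le_pow_of_le_one (by norm_num) (by norm_num) h
  have hterm (k : ℕ) : ENNReal.ofReal (w (2⁻¹ ^ (k + 1))) ≤
      2 * ∫⁻ t in Ioo ((2 : ℝ)⁻¹ ^ (k + 1)) (2⁻¹ ^ k), ENNReal.ofReal (w t / t) := by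
    have hk : (2 : ℝ)⁻¹ ^ k = 2 * 2⁻¹ ^ (k + 1) := by rw [pow_succ]; ring
    rw [hk]
    exact ofReal_le_two_mul_setLIntegral_div hw (by positivity)
  refine (ENNReal.tsum_le_tsum hterm).trans ?_
  rw [ENNReal.tsum_mul_left, ← lintegral_iUnion (fun _ => measurableSet_Ioo)
    (by simpa using hanti.pairwise_disjoint_on_Ioo_succ)]
  gcongr
  exact iUnion_subset fun k => Ioo_subset_Ioo (by positivity)
    (pow_le_one₀ (by norm_num) (by norm_num))

end DiniSum

section HaarShells

open Module

variable {E : Type*} [NormedAddCommGroup E] [NormedSpace ℝ E] [FiniteDimensional ℝ E]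
  [MeasurableSpace E] [BorelSpace E] (μ : Measure E) [μ.IsAddHaarMeasure] {x : E} {a b δ R : ℝ}

lemma ballGrowth_one (x : E) : BallGrowth μ (fun _ => 1) x (finrank ℝ E) (μ (ball 0 1)) := by
  intro t ht
  rw [setLIntegral_one, Measure.addHaar_closedBall μ x ht.le, ENNReal.ofReal_pow ht.le,
    ENNReal.rpow_natCast]

lemma addHaar_closed_shell_le (ha : 0 < a) (hab : a ≤ b) :
    μ {y | a ≤ dist x y ∧ dist x y ≤ b} ≤
      ENNReal.ofReal (finrank ℝ E * b ^ (finrank ℝ E - 1) * (b - a)) * μ (ball 0 1) := by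
  set n := finrank ℝ E
  have hpow : b ^ n - a ^ n ≤ n * b ^ (n - 1) * (b - a) := by
    have h := abs_pow_sub_pow_le b a n
    rw [abs_of_nonneg (sub_nonneg.2 hab), abs_of_nonneg (ha.le.trans hab), abs_of_nonneg ha.le,
      max_eq_left hab] at h
    linarith [le_abs_self (b ^ n - a ^ n)]
  calc μ {y | a ≤ dist x y ∧ dist x y ≤ b} ≤ μ (closedBall x b \ ball x a) :=
        measure_mono fun y hy => by simpa [dist_comm y x] using And.symm hy
    _ = ENNReal.ofReal (b ^ n - a ^ n) * μ (ball 0 1) := by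
        rw [measure_sdiff (ball_subset_closedBall.trans (closedBall_subset_closedBall hab))
          measurableSet_ball.nullMeasurableSet measure_ball_lt_top.ne,
          Measure.addHaar_closedBall μ x (ha.le.trans hab), Measure.addHaar_ball_of_pos μ x ha,
          ENNReal.ofReal_sub _ (by positivity),
          ENNReal.sub_mul fun _ _ => measure_ball_lt_top.ne]
    _ ≤ _ := by gcongr

variable [Nontrivial E]

lemma setLIntegral_closed_shell_edist_rpow_le (ha : 0 < a) (hδ : 0 ≤ δ) (hδa : 2 * δ ≤ a) :
    ∫⁻ y in {y | a ≤ dist x y ∧ dist x y ≤ a + 2 * δ}, edist x y ^ (1 - finrank ℝ E : ℝ) ∂μ ≤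
      ENNReal.ofReal (finrank ℝ E * 2 ^ finrank ℝ E * δ) * μ (ball 0 1) := by
  obtain ⟨n, hn⟩ : ∃ n, finrank ℝ E = n + 1 := Nat.exists_eq_add_one.2 finrank_pos
  have hshell : μ {y | a ≤ dist x y ∧ dist x y ≤ a + 2 * δ} ≤
      ENNReal.ofReal ((n + 1) * (a + 2 * δ) ^ n * (2 * δ)) * μ (ball 0 1) := by
    simpa [hn] using addHaar_closed_shell_le μ (x := x) ha (by linarith : a ≤ a + 2 * δ)
  have hdecay (y : E) (hy : a ≤ dist x y) :
      edist x y ^ (1 - finrank ℝ E : ℝ) ≤ ENNReal.ofReal (a ^ n)⁻¹ := by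
    have he : (1 - finrank ℝ E : ℝ) = -(n : ℝ) := by rw [hn]; push_cast; ring
    rw [he, ENNReal.rpow_neg, ENNReal.rpow_natCast, edist_dist,
      ENNReal.ofReal_inv_of_pos (by positivity), ENNReal.ofReal_pow ha.le]
    gcongr
  calc ∫⁻ y in {y | a ≤ dist x y ∧ dist x y ≤ a + 2 * δ}, edist x y ^ (1 - finrank ℝ E : ℝ) ∂μ
      ≤ ∫⁻ _ in {y | a ≤ dist x y ∧ dist x y ≤ a + 2 * δ}, ENNReal.ofReal (a ^ n)⁻¹ ∂μ :=
        setLIntegral_mono measurable_const fun y hy => hdecay y hy.1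
    _ ≤ ENNReal.ofReal (a ^ n)⁻¹ *
          (ENNReal.ofReal ((n + 1) * (a + 2 * δ) ^ n * (2 * δ)) * μ (ball 0 1)) := by
        rw [setLIntegral_const]; gcongr
    _ ≤ _ := by
        rw [← mul_assoc, ← ENNReal.ofReal_mul (by positivity)]
        gcongr ENNReal.ofReal ?_ * _
        have hgrow : (a + 2 * δ) ^ n ≤ 2 ^ n * a ^ n := by
          rw [← mul_pow]; gcongr; linarith
        calc (a ^ n)⁻¹ * ((n + 1) * (a + 2 * δ) ^ n * (2 * δ))
            ≤ (a ^ n)⁻¹ * ((n + 1) * (2 ^ n * a ^ n) * (2 * δ)) := by gcongr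
          _ = finrank ℝ E * 2 ^ finrank ℝ E * δ := by rw [hn]; push_cast; field_simp; ring

lemma setLIntegral_abs_dist_sub_le_edist_rpow_le (t : ℝ) (hR : 0 < R) (hδ : 0 ≤ δ)
    (hδR : 2 * δ ≤ R) :
    ∫⁻ y in {y | R < dist x y} ∩ {y | |dist x y - t| ≤ δ},
        edist x y ^ (1 - finrank ℝ E : ℝ) ∂μ ≤
      ENNReal.ofReal (finrank ℝ E * 2 ^ finrank ℝ E * δ) * μ (ball 0 1) := by
  refine (lintegral_mono_set ?_).trans (setLIntegral_closed_shell_edist_rpow_le μ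
    (a := max R (t - δ)) (lt_max_of_lt_left hR) hδ (le_max_of_le_left hδR))
  rintro y ⟨hy, hyt⟩
  simp only [mem_ofPred_eq, abs_le] at hy hyt ⊢
  grind

end HaarShells

section Crossing

open Module

/-- The points at distance more than `R` from `x` which lie in exactly one of the two annuli of
radii `a < b` around `ξ` and around `x`. -/
def crossing {X : Type*} [PseudoMetricSpace X] (x ξ : X) (R a b : ℝ) : Set X :=
  {y | R < dist x y} ∩ shell ξ a b ∆ shell x a b

lemma measurableSet_crossing {X : Type*} [PseudoMetricSpace X] [MeasurableSpace X]
    [OpensMeasurableSpace X] (x ξ : X) (R a b : ℝ) : MeasurableSet (crossing x ξ R a b) :=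
  (measurableSet_lt_dist x R).inter
    ((measurableSet_shell ξ a b).symmDiff (measurableSet_shell x a b))

lemma tsum_setLIntegral_crossing_le {X : Type*} [PseudoMetricSpace X] [MeasurableSpace X]
    [OpensMeasurableSpace X] (μ : Measure X) (x ξ : X) (R : ℝ) {ε : ℕ → ℝ} (hε : Antitone ε)
    (h : X → ℝ≥0∞) :
    ∑' i, ∫⁻ y in crossing x ξ R (ε (i + 1)) (ε i), h y ∂μ ≤
      2 * ∫⁻ y in {y | R < dist x y}, h y ∂μ := by
  have hsplit (i : ℕ) : crossing x ξ R (ε (i + 1)) (ε i) ⊆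
      (shell ξ (ε (i + 1)) (ε i) ∩ {y | R < dist x y}) ∪
        (shell x (ε (i + 1)) (ε i) ∩ {y | R < dist x y}) := by
    unfold crossing; grind
  calc _ ≤ ∑' i, ((∫⁻ y in shell ξ (ε (i + 1)) (ε i) ∩ {y | R < dist x y}, h y ∂μ) +
          ∫⁻ y in shell x (ε (i + 1)) (ε i) ∩ {y | R < dist x y}, h y ∂μ) :=
        ENNReal.tsum_le_tsum fun i =>
          (lintegral_mono_set (hsplit i)).trans (lintegral_union_le _ _ _)
    _ ≤ _ := by
        rw [ENNReal.tsum_add, two_mul]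
        gcongr <;> exact tsum_setLIntegral_shell_inter_le μ _ hε (measurableSet_lt_dist x R) h

variable {E : Type*} [NormedAddCommGroup E] [NormedSpace ℝ E] [FiniteDimensional ℝ E]
  [MeasurableSpace E] {μ : Measure E} [μ.IsAddHaarMeasure] {r : ℝ}

/-- The bound, relative to the growth of `F ^ r` on balls, for the `ℓ^r` norm of the integrals of
`|x - y|⁻ⁿ F(y)` over successive crossings, where `n` is the dimension. -/
def crossingConst (μ : Measure E) (r : ℝ) : ℝ≥0∞ :=
  ((ENNReal.ofReal (finrank ℝ E * 2 ^ finrank ℝ E) * μ (ball 0 1)) ^ (r - 1) *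
    (2 * (2 ^ (finrank ℝ E : ℝ) * (1 - 2 ^ (1 - r))⁻¹))) ^ (1 / r)

lemma crossingConst_ne_top (hr : 1 < r) : crossingConst μ r ≠ ⊤ := by
  have hball : μ (ball 0 1) ≠ ⊤ := measure_ball_lt_top.ne
  have hgeom : (2 : ℝ≥0∞) ^ (1 - r) < 1 :=
    ENNReal.rpow_lt_one_of_one_lt_of_neg ENNReal.one_lt_two (by linarith)
  have hr₁ : 0 ≤ r - 1 := by linarith
  have hr₀ : 0 ≤ 1 / r := by positivity
  have hgeom' : (1 - (2 : ℝ≥0∞) ^ (1 - r))⁻¹ ≠ ⊤ := by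
    simpa [tsub_eq_zero_iff_le] using hgeom
  unfold crossingConst
  finiteness

variable [Nontrivial E] [BorelSpace E] {x ξ : E} {R : ℝ} {m : ℝ≥0∞} {F : E → ℝ≥0∞}

lemma setLIntegral_crossing_edist_rpow_le (μ : Measure E) [μ.IsAddHaarMeasure] (a b : ℝ)
    (hR : 0 < R) (hξ : 2 * dist x ξ ≤ R) :
    ∫⁻ y in crossing x ξ R a b, edist x y ^ (1 - finrank ℝ E : ℝ) ∂μ ≤
      ENNReal.ofReal (finrank ℝ E * 2 ^ finrank ℝ E) * μ (ball 0 1) * ENNReal.ofReal R := by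
  have hthin (t : ℝ) := setLIntegral_abs_dist_sub_le_edist_rpow_le μ (x := x) t hR dist_nonneg hξ
  calc _ ≤ ∫⁻ y in {y | R < dist x y} ∩ {y | |dist x y - a| ≤ dist x ξ} ∪
          {y | R < dist x y} ∩ {y | |dist x y - b| ≤ dist x ξ},
            edist x y ^ (1 - finrank ℝ E : ℝ) ∂μ := by
        rw [← inter_union_distrib_left]
        gcongr
        exact inter_subset_inter_right _ (symmDiff_shell_subset x ξ a b)
    _ ≤ ENNReal.ofReal (finrank ℝ E * 2 ^ finrank ℝ E * dist x ξ) * μ (ball 0 1) +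
          ENNReal.ofReal (finrank ℝ E * 2 ^ finrank ℝ E * dist x ξ) * μ (ball 0 1) :=
        (lintegral_union_le _ _ _).trans (add_le_add (hthin a) (hthin b))
    _ = ENNReal.ofReal (finrank ℝ E * 2 ^ finrank ℝ E) * μ (ball 0 1) *
          ENNReal.ofReal (2 * dist x ξ) := by
        rw [ENNReal.ofReal_mul (by positivity), ENNReal.ofReal_mul zero_le_two,
          ENNReal.ofReal_ofNat]
        ring
    _ ≤ _ := by gcongr

lemma rpow_setLIntegral_crossing_le (hr : 1 < r) (hF : AEMeasurable F μ) (a b : ℝ) (hR : 0 < R)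
    (hξ : 2 * dist x ξ ≤ R) :
    (∫⁻ y in crossing x ξ R a b, edist x y ^ (-finrank ℝ E : ℝ) * F y ∂μ) ^ r ≤
      (ENNReal.ofReal (finrank ℝ E * 2 ^ finrank ℝ E) * μ (ball 0 1) *
        ENNReal.ofReal R) ^ (r - 1) *
      ∫⁻ y in crossing x ξ R a b, edist x y ^ (-(r + finrank ℝ E - 1)) * F y ^ r ∂μ := by
  set n := (finrank ℝ E : ℝ)
  have hedist (y : E) (hy : y ∈ crossing x ξ R a b) : edist x y ≠ 0 := by
    rw [edist_dist, ne_eq, ENNReal.ofReal_eq_zero, not_le]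
    exact hR.trans hy.1
  have hmem := ae_restrict_mem (μ := μ) (measurableSet_crossing x ξ R a b)
  have hφ : AEMeasurable (fun y => edist x y ^ (-n) * F y) (μ.restrict (crossing x ξ R a b)) :=
    AEMeasurable.mul (by fun_prop) hF.restrict
  -- Hölder against `|x - y| ^ (1 - n)`, the weight for which the mass of a thin annulus is
  -- comparable to its width whatever its radius.
  have hholder := rpow_lintegral_le_weighted (u := fun y => edist x y ^ (1 - n)) hr
    (by fun_prop) hφ ?_ ?_
  · refine hholder.trans (mul_le_mul' (ENNReal.rpow_le_rpow
      (setLIntegral_crossing_edist_rpow_le μ a b hR hξ) (by linarith)) (lintegral_congr_ae ?_).le)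
    filter_upwards [hmem] with y hy
    have he : (1 - n) * (1 - r) + -n * r = -(r + n - 1) := by ring
    rw [ENNReal.mul_rpow_of_nonneg _ _ (by linarith), ← mul_assoc, ← ENNReal.rpow_mul,
      ← ENNReal.rpow_mul, ← ENNReal.rpow_add _ _ (hedist y hy) (edist_ne_top _ _), he]
  · filter_upwards [hmem] with y hy
    exact (ENNReal.rpow_pos (pos_iff_ne_zero.2 (hedist y hy)) (edist_ne_top _ _)).ne'
  · filter_upwards [hmem] with y hy
    exact ENNReal.rpow_ne_top_of_ne_zero (hedist y hy) (edist_ne_top _ _)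

lemma rpow_tsum_setLIntegral_crossing_le (hr : 1 < r) (hF : AEMeasurable F μ)
    (hgrowth : BallGrowth μ (fun y => F y ^ r) x (finrank ℝ E) m) (hR : 0 < R)
    (hξ : 2 * dist x ξ ≤ R) {ε : ℕ → ℝ} (hε : Antitone ε) :
    (∑' i, (∫⁻ y in crossing x ξ R (ε (i + 1)) (ε i),
        edist x y ^ (-finrank ℝ E : ℝ) * F y ∂μ) ^ r) ^ (1 / r) ≤
      crossingConst μ r * m ^ (1 / r) := by
  set n := (finrank ℝ E : ℝ)
  set c := ENNReal.ofReal (finrank ℝ E * 2 ^ finrank ℝ E) * μ (ball 0 1)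
  have hR₀ : ENNReal.ofReal R ≠ 0 := by simpa using hR
  have htail : ∫⁻ y in {y | R < dist x y}, edist x y ^ (-(r + n - 1)) * F y ^ r ∂μ ≤
      2 ^ n * (1 - 2 ^ (1 - r))⁻¹ * ENNReal.ofReal R ^ (1 - r) * m := by
    have he : n - (r + n - 1) = 1 - r := by ring
    have hn₀ : 0 ≤ n := by positivity
    simpa only [he] using hgrowth.setLIntegral_edist_rpow_neg_mul_le hR
      (by linarith : 0 ≤ r + n - 1)
  have hscale : ENNReal.ofReal R ^ (r - 1) * ENNReal.ofReal R ^ (1 - r) = 1 := by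
    rw [← ENNReal.rpow_add _ _ hR₀ ENNReal.ofReal_ne_top]; simp
  have hsum : ∑' i, (∫⁻ y in crossing x ξ R (ε (i + 1)) (ε i),
        edist x y ^ (-n) * F y ∂μ) ^ r ≤
      c ^ (r - 1) * (2 * (2 ^ n * (1 - 2 ^ (1 - r))⁻¹)) * m :=
    calc _ ≤ ∑' i, (c * ENNReal.ofReal R) ^ (r - 1) *
            ∫⁻ y in crossing x ξ R (ε (i + 1)) (ε i), edist x y ^ (-(r + n - 1)) * F y ^ r ∂μ :=
          ENNReal.tsum_le_tsum fun i => rpow_setLIntegral_crossing_le hr hF _ _ hR hξ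
      _ ≤ (c * ENNReal.ofReal R) ^ (r - 1) *
            (2 * (2 ^ n * (1 - 2 ^ (1 - r))⁻¹ * ENNReal.ofReal R ^ (1 - r) * m)) := by
          rw [ENNReal.tsum_mul_left]
          gcongr
          exact (tsum_setLIntegral_crossing_le μ x ξ R hε _).trans (by gcongr)
      _ = c ^ (r - 1) * (2 * (2 ^ n * (1 - 2 ^ (1 - r))⁻¹)) * m *
            (ENNReal.ofReal R ^ (r - 1) * ENNReal.ofReal R ^ (1 - r)) := by
          rw [ENNReal.mul_rpow_of_nonneg _ _ (by linarith)]; ring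
      _ = _ := by rw [hscale, mul_one]
  rw [crossingConst, ← ENNReal.mul_rpow_of_nonneg _ _ (by positivity)]
  gcongr

end Crossing

section MonotoneSequences

lemma exists_strictAnti_sum_range_le {Φ : ℝ → ℝ → ℝ≥0∞} (hΦ : ∀ t, Φ t t = 0) (n : ℕ)
    {η : ℕ → ℝ} (hη : Antitone η) (hη₀ : ∀ i, 0 < η i) :
    ∃ ε : ℕ → ℝ, (StrictAnti ε ∧ (∀ i, 0 < ε i) ∧ Tendsto ε atTop (nhds 0)) ∧ ε 0 = η 0 ∧
      ∑ i ∈ Finset.range n, Φ (η (i + 1)) (η i) ≤ ∑' i, Φ (ε (i + 1)) (ε i) := by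
  induction n generalizing η with
  | zero =>
    refine ⟨fun i => η 0 * 2⁻¹ ^ i, ⟨fun i j hij => ?_, fun i => ?_, ?_⟩, by simp, by simp⟩
    · exact mul_lt_mul_of_pos_left (pow_lt_pow_right_of_lt_one₀ (by norm_num) (by norm_num) hij)
        (hη₀ 0)
    · exact mul_pos (hη₀ 0) (by positivity)
    · simpa using (tendsto_pow_atTop_nhds_zero_of_lt_one (by norm_num : (0 : ℝ) ≤ 2⁻¹)
        (by norm_num)).const_mul (η 0)
  | succ n ih =>
    obtain ⟨ε, ⟨hε, hε_pos, hε_lim⟩, hε₀, hsum⟩ :=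
      ih (η := fun i => η (i + 1)) (fun i j hij => hη (by lia)) fun i => hη₀ (i + 1)
    rw [Finset.sum_range_succ']
    rcases (hη zero_le_one).eq_or_lt with heq | hlt
    · exact ⟨ε, ⟨hε, hε_pos, hε_lim⟩, hε₀.trans heq, by simpa [heq, hΦ] using hsum⟩
    refine ⟨fun i => Nat.casesOn i (η 0) ε, ⟨strictAnti_nat_of_succ_lt ?_, ?_, ?_⟩, rfl, ?_⟩
    · rintro (_ | i)
      · exact hε₀.trans_lt hlt
      · exact hε i.lt_succ_self
    · rintro (_ | i)
      exacts [hη₀ 0, hε_pos i]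
    · exact (tendsto_add_atTop_iff_nat 1).1 hε_lim
    · rw [tsum_eq_zero_add' ENNReal.summable, add_comm]
      simpa [hε₀] using add_le_add_right hsum _

end MonotoneSequences

lemma ofReal_div_dist_pow {X : Type*} [MetricSpace X] {x y : X} (hxy : x ≠ y) (c : ℝ) (n : ℕ) :
    ENNReal.ofReal (c / dist x y ^ n) = ENNReal.ofReal c * edist x y ^ (-n : ℝ) := by
  have hpos : 0 < dist x y := dist_pos.2 hxy
  rw [ENNReal.ofReal_div_of_pos (by positivity), ENNReal.ofReal_pow hpos.le, edist_dist,
    ENNReal.rpow_neg, ENNReal.rpow_natCast, div_eq_mul_inv]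

namespace CZO

variable {d : ℕ} (S : CZO d) {f : Rd d → ℝ} {x ξ y : Rd d} {ρ r R R₀ : ℝ} {m : ℝ≥0∞}

lemma measurable_K (z : Rd d) : Measurable (S.K z) := S.measK.of_uncurry_left

lemma enorm_K_le (hxy : x ≠ y) :
    ‖S.K x y‖ₑ ≤ ENNReal.ofReal S.Cst * edist x y ^ (-d : ℝ) := by
  rw [← ofReal_div_dist_pow hxy, Real.enorm_eq_ofReal_abs]
  exact ENNReal.ofReal_le_ofReal (S.size x y hxy)

lemma enorm_K_sub_le (hxy : x ≠ y) (hξ : dist x ξ ≤ dist x y / 2) :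
    ‖S.K ξ y - S.K x y‖ₑ ≤ ENNReal.ofReal S.Cst * ENNReal.ofReal (S.ω (dist x ξ / dist x y)) *
      edist x y ^ (-d : ℝ) := by
  rw [← ENNReal.ofReal_mul S.hCst.le, ← ofReal_div_dist_pow hxy, ← enorm_neg, neg_sub,
    Real.enorm_eq_ofReal_abs]
  exact ENNReal.ofReal_le_ofReal
    ((le_add_of_nonneg_right (abs_nonneg _)).trans (S.smooth x ξ y hxy hξ))

/-- All the integrals defining the truncations `T_ε f(z)` converge absolutely. -/
def TruncIntegrable (f : Rd d → ℝ) : Prop :=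
  ∀ (z : Rd d) (ε : ℝ), 0 < ε → IntegrableOn (fun y => S.K z y * f y) {y | ε < dist z y}

lemma setLIntegral_enorm_K_rpow_ne_top (z : Rd d) {ε p : ℝ} (hd : 0 < d) (hε : 0 < ε)
    (hp : 1 < p) : ∫⁻ y in {y | ε < dist z y}, ‖S.K z y‖ₑ ^ p ≠ ⊤ := by
  have hp₀ : 0 ≤ p := by linarith
  have hdp : (d : ℝ) - d * p < 0 := by
    have : (0 : ℝ) < d := by exact_mod_cast hd
    nlinarith
  have hgeom : (1 - (2 : ℝ≥0∞) ^ ((d : ℝ) - d * p))⁻¹ ≠ ⊤ := by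
    simpa [tsub_eq_zero_iff_le] using ENNReal.rpow_lt_one_of_one_lt_of_neg ENNReal.one_lt_two hdp
  have hball : volume (ball (0 : Rd d) 1) ≠ ⊤ := measure_ball_lt_top.ne
  have hε_pow : ENNReal.ofReal ε ^ ((d : ℝ) - d * p) ≠ ⊤ :=
    ENNReal.rpow_ne_top_of_ne_zero (by simpa using hε) ENNReal.ofReal_ne_top
  refine ne_top_of_le_ne_top (?_ : ENNReal.ofReal S.Cst ^ p * (2 ^ (d : ℝ) *
    (1 - 2 ^ ((d : ℝ) - d * p))⁻¹ * ENNReal.ofReal ε ^ ((d : ℝ) - d * p) *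
      volume (ball (0 : Rd d) 1)) ≠ ⊤) ?_
  · finiteness
  calc ∫⁻ y in {y | ε < dist z y}, ‖S.K z y‖ₑ ^ p
      ≤ ∫⁻ y in {y | ε < dist z y}, ENNReal.ofReal S.Cst ^ p * (edist z y ^ (-(d * p)) * 1) := by
        refine setLIntegral_mono' (measurableSet_lt_dist z ε) fun y hy => ?_
        rw [mul_one, ← neg_mul, ENNReal.rpow_mul, ← ENNReal.mul_rpow_of_nonneg _ _ hp₀]
        gcongr
        exact S.enorm_K_le (dist_pos.1 (hε.trans hy))
    _ ≤ _ := by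
        rw [lintegral_const_mul' _ _ (by finiteness)]
        gcongr
        simpa using (ballGrowth_one volume z).setLIntegral_edist_rpow_neg_mul_le hε
          (by positivity : (0 : ℝ) ≤ d * p)

lemma truncIntegrable_of_lintegral_rpow_ne_top (hd : 0 < d) {q : ℝ} (hq : 1 < q)
    (hf : AEMeasurable f) (hfq : ∫⁻ x, ‖f x‖ₑ ^ q ≠ ⊤) : S.TruncIntegrable f := by
  intro z ε hε
  have hconj : (q / (q - 1)).HolderConjugate q := (Real.HolderConjugate.conjExponent hq).symm
  have hK := S.setLIntegral_enorm_K_rpow_ne_top z hd hε hconj.lt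
  have hf_restrict : ∫⁻ y in {y | ε < dist z y}, ‖f y‖ₑ ^ q ≠ ⊤ :=
    ne_top_of_le_ne_top hfq (setLIntegral_le_lintegral _ _)
  refine ⟨((S.measurable_K z).aemeasurable.mul hf).aestronglyMeasurable.restrict, ?_⟩
  rw [hasFiniteIntegral_iff_enorm]
  simp_rw [enorm_mul]
  refine (ENNReal.lintegral_mul_le_Lp_mul_Lq _ hconj (S.measurable_K z).enorm.aemeasurable
    hf.enorm.restrict).trans_lt (ENNReal.mul_lt_top ?_ ?_)
  · exact ENNReal.rpow_lt_top_of_nonneg (one_div_nonneg.2 hconj.nonneg) hK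
  · exact ENNReal.rpow_lt_top_of_nonneg (by positivity) hf_restrict

variable {S}

lemma TruncIntegrable.indicator (hf : S.TruncIntegrable f) {H : Set (Rd d)}
    (hH : MeasurableSet H) : S.TruncIntegrable (H.indicator f) := by
  intro z ε hε
  simpa only [← indicator_mul_right] using IntegrableOn.indicator (hf z ε hε) hH

lemma TruncIntegrable.integrableOn_shell (hf : S.TruncIntegrable f) (z : Rd d) {a : ℝ}
    (ha : 0 < a) (b : ℝ) : IntegrableOn (fun y => S.K z y * f y) (shell z a b) :=
  (hf z a ha).mono_set fun _ hy => hy.1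

lemma TruncIntegrable.trunc_sub_trunc (hf : S.TruncIntegrable f) (z : Rd d) {a b : ℝ}
    (ha : 0 < a) (hab : a ≤ b) :
    S.trunc a f z - S.trunc b f z = ∫ y in shell z a b, S.K z y * f y := by
  have hunion : {y | a < dist z y} = shell z a b ∪ {y | b < dist z y} := by
    ext y
    simp only [shell, mem_union, mem_ofPred_eq]
    grind
  have hdisj : Disjoint (shell z a b) {y | b < dist z y} :=
    Set.disjoint_left.2 fun y hy hy' => hy.2.not_gt hy'
  rw [trunc, hunion, setIntegral_union hdisj (measurableSet_lt_dist z b)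
    (hf.integrableOn_shell z ha b) (hf z b (ha.trans_le hab)), trunc, add_sub_cancel_right]

lemma rpow_tsum_trunc_sub_le_var (hρ : 0 < ρ) {η : ℕ → ℝ} (hη : Antitone η)
    (hη₀ : ∀ i, 0 < η i) :
    (∑' i, ‖S.trunc (η (i + 1)) f x - S.trunc (η i) f x‖ₑ ^ ρ) ^ (1 / ρ) ≤ S.var ρ f x := by
  rw [one_div, ENNReal.rpow_inv_le_iff hρ]
  refine ENNReal.tsum_le_of_sum_range_le fun n => ?_
  obtain ⟨ε, hε, -, hle⟩ := exists_strictAnti_sum_range_le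
    (Φ := fun s t => ‖S.trunc s f x - S.trunc t f x‖ₑ ^ ρ) (by simp [hρ]) n hη hη₀
  refine hle.trans ?_
  rw [← ENNReal.rpow_inv_le_iff hρ, ← one_div]
  simp_rw [Real.enorm_eq_ofReal_abs]
  exact le_iSup₂ (f := fun (ε : ℕ → ℝ) _ => (∑' i : ℕ, ENNReal.ofReal
    |S.trunc (ε (i + 1)) f x - S.trunc (ε i) f x| ^ ρ) ^ (1 / ρ)) ε hε

lemma TruncIntegrable.rpow_tsum_shell_inter_shell_le_var (hf : S.TruncIntegrable f) (hρ : 0 < ρ)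
    (hR : 0 < R) {ε : ℕ → ℝ} (hε : Antitone ε) :
    (∑' i, ‖∫ y in shell x (ε (i + 1)) (ε i) ∩ shell x R R₀, S.K x y * f y‖ₑ ^ ρ) ^ (1 / ρ) ≤
      S.var ρ f x := by
  set η : ℕ → ℝ := fun i => max R (min R₀ (ε i)) with hη_def
  have hη : Antitone η := fun i j hij => max_le_max_left _ (min_le_min_left _ (hε hij))
  have hη₀ (i : ℕ) : 0 < η i := lt_max_of_lt_left hR
  have hshell (i : ℕ) :
      shell x (ε (i + 1)) (ε i) ∩ shell x R R₀ = shell x (η (i + 1)) (η i) := by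
    ext y
    simp only [shell, hη_def, mem_inter_iff, mem_ofPred_eq, max_lt_iff, min_lt_iff, le_max_iff,
      le_min_iff]
    grind
  simp_rw [hshell, ← hf.trunc_sub_trunc x (hη₀ _) (hη (Nat.le_succ _))]
  exact rpow_tsum_trunc_sub_le_var hρ hη hη₀

variable (S)

lemma setLIntegral_enorm_K_mul_le {P : Set (Rd d)} (hP : MeasurableSet P) {c t : ℝ} (hc : 0 < c)
    (ht : 0 < t) (hPt : P ⊆ closedBall x t) (hPc : ∀ y ∈ P, c ≤ dist ξ y)
    (hgrowth : BallGrowth volume (fun y => ‖f y‖ₑ) x d m) :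
    ∫⁻ y in P, ‖S.K ξ y * f y‖ₑ ≤ ENNReal.ofReal (S.Cst * (t / c) ^ d) * m := by
  have hCst := S.hCst.le
  have hK (y : Rd d) (hy : y ∈ P) : ‖S.K ξ y‖ₑ ≤ ENNReal.ofReal (S.Cst / c ^ d) := by
    have hξy : c ≤ dist ξ y := hPc y hy
    rw [Real.enorm_eq_ofReal_abs]
    refine ENNReal.ofReal_le_ofReal ((S.size ξ y (dist_pos.1 (hc.trans_le hξy))).trans ?_)
    gcongr
  calc ∫⁻ y in P, ‖S.K ξ y * f y‖ₑ
      ≤ ∫⁻ y in P, ENNReal.ofReal (S.Cst / c ^ d) * ‖f y‖ₑ :=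
        setLIntegral_mono' hP fun y hy => by rw [enorm_mul]; gcongr; exact hK y hy
    _ ≤ ENNReal.ofReal (S.Cst / c ^ d) * ∫⁻ y in closedBall x t, ‖f y‖ₑ := by
        rw [lintegral_const_mul' _ _ ENNReal.ofReal_ne_top]
        gcongr
    _ ≤ ENNReal.ofReal (S.Cst / c ^ d) * (ENNReal.ofReal t ^ (d : ℝ) * m) := by
        gcongr; exact hgrowth t ht
    _ = _ := by
        rw [ENNReal.rpow_natCast, ← ENNReal.ofReal_pow ht.le, ← mul_assoc,
          ← ENNReal.ofReal_mul (by positivity)]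
        congr 2
        rw [div_pow]; ring

/-- The dyadic form `∑ₖ ω(2⁻ᵏ⁻¹)` of the Dini integral of the modulus of continuity. -/
def diniSum : ℝ≥0∞ := ∑' k : ℕ, ENNReal.ofReal (S.ω (2⁻¹ ^ (k + 1)))

lemma diniSum_ne_top : S.diniSum ≠ ⊤ := by
  have hdini : ∫⁻ t in Ioo (0 : ℝ) 1, ENNReal.ofReal (S.ω t / t) ≠ ⊤ :=
    S.dini.lintegral_lt_top.ne
  exact ne_top_of_le_ne_top (by finiteness) (tsum_ofReal_dyadic_le_setLIntegral_div S.ω_mono)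

lemma enorm_K_sub_le_of_dyadic (hR : 0 < R) (hξ : 2 * dist x ξ ≤ R) (k : ℕ)
    (hy : 2 ^ k * R ≤ dist x y) :
    ‖S.K ξ y - S.K x y‖ₑ ≤ ENNReal.ofReal S.Cst * ENNReal.ofReal (S.ω (2⁻¹ ^ (k + 1))) *
      ENNReal.ofReal (2 ^ k * R) ^ (-d : ℝ) := by
  have hxy : 0 < dist x y := lt_of_lt_of_le (by positivity) hy
  have hratio : dist x ξ / dist x y ≤ 2⁻¹ ^ (k + 1) := by
    rw [div_le_iff₀ hxy]
    calc dist x ξ ≤ 2⁻¹ ^ (k + 1) * (2 ^ k * R) := by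
          rw [pow_succ, inv_pow]; field_simp; linarith
      _ ≤ 2⁻¹ ^ (k + 1) * dist x y := by gcongr
  have hhalf : dist x ξ ≤ dist x y / 2 := by
    have : (2 : ℝ)⁻¹ ^ (k + 1) ≤ 2⁻¹ :=
      pow_le_of_le_one (by norm_num) (by norm_num) k.succ_ne_zero
    rw [div_le_iff₀ hxy] at hratio
    nlinarith
  refine (S.enorm_K_sub_le (dist_pos.1 hxy) hhalf).trans ?_
  rw [ENNReal.rpow_neg, ENNReal.rpow_neg, edist_dist]
  gcongr
  exact S.ω_mono (div_nonneg dist_nonneg hxy.le)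
    (pow_nonneg (by norm_num : (0 : ℝ) ≤ 2⁻¹) (k + 1)) hratio

lemma setLIntegral_enorm_K_sub_mul_le (hR : 0 < R) (hξ : 2 * dist x ξ ≤ R)
    (hgrowth : BallGrowth volume (fun y => ‖f y‖ₑ) x d m) :
    ∫⁻ y in {y | R < dist x y}, ‖S.K ξ y * f y - S.K x y * f y‖ₑ ≤
      ENNReal.ofReal S.Cst * 2 ^ d * S.diniSum * m := by
  have hscale (k : ℕ) : ENNReal.ofReal (2 ^ k * R) ^ (-d : ℝ) *
      ENNReal.ofReal (2 ^ (k + 1) * R) ^ (d : ℝ) = 2 ^ d := by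
    have hk₀ : ENNReal.ofReal (2 ^ k * R) ^ d ≠ 0 := by simp [hR]
    rw [pow_succ', mul_assoc 2, ENNReal.ofReal_mul zero_le_two, ENNReal.ofReal_ofNat,
      ENNReal.rpow_neg, ENNReal.rpow_natCast, ENNReal.rpow_natCast, mul_pow, mul_left_comm,
      ENNReal.inv_mul_cancel hk₀ (by finiteness), mul_one]
  simp_rw [← sub_mul, enorm_mul]
  calc _ ≤ ∑' k : ℕ, ENNReal.ofReal S.Cst * ENNReal.ofReal (S.ω (2⁻¹ ^ (k + 1))) *
          ENNReal.ofReal (2 ^ k * R) ^ (-d : ℝ) *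
            (ENNReal.ofReal (2 ^ (k + 1) * R) ^ (d : ℝ) * m) := by
        refine hgrowth.setLIntegral_mul_le_tsum hR (fun k => ?_)
          fun k y hy => S.enorm_K_sub_le_of_dyadic hR hξ k hy
        have := ENNReal.rpow_ne_top_of_ne_zero (y := (-d : ℝ))
          (by simp [hR] : ENNReal.ofReal (2 ^ k * R) ≠ 0) ENNReal.ofReal_ne_top
        finiteness
    _ = ∑' k : ℕ, ENNReal.ofReal S.Cst * 2 ^ d * m * ENNReal.ofReal (S.ω (2⁻¹ ^ (k + 1))) := by
        refine tsum_congr fun k => ?_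
        rw [← hscale k]; ring
    _ = _ := by rw [ENNReal.tsum_mul_left, diniSum]; ring

lemma enorm_K_le_of_two_mul_dist_le (hxy : 0 < dist x y)
    (hξ : 2 * dist x ξ ≤ dist x y) :
    ‖S.K ξ y‖ₑ ≤ ENNReal.ofReal S.Cst * 2 ^ d * edist x y ^ (-d : ℝ) := by
  have hhalf : dist x y / 2 ≤ dist ξ y := by linarith [dist_triangle x ξ y]
  have hCst := S.hCst.le
  have hξy : ξ ≠ y := dist_pos.1 (by linarith)
  have htwo : ENNReal.ofReal S.Cst * 2 ^ d = ENNReal.ofReal (S.Cst * 2 ^ d) := by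
    rw [ENNReal.ofReal_mul hCst, ENNReal.ofReal_pow zero_le_two, ENNReal.ofReal_ofNat]
  rw [htwo, ← ofReal_div_dist_pow (dist_pos.1 hxy), Real.enorm_eq_ofReal_abs]
  refine ENNReal.ofReal_le_ofReal ?_
  calc |S.K ξ y| ≤ S.Cst / dist ξ y ^ d := S.size ξ y hξy
    _ ≤ S.Cst / (dist x y / 2) ^ d := by gcongr
    _ = S.Cst * 2 ^ d / dist x y ^ d := by rw [div_pow]; field_simp

lemma rpow_tsum_setLIntegral_crossing_enorm_K_mul_le (hd : 0 < d) (hr : 1 < r)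
    (hf : AEMeasurable f) (hgrowth : BallGrowth volume (fun y => ‖f y‖ₑ ^ r) x d m)
    (hR : 0 < R) (hξ : 2 * dist x ξ ≤ R) {ε : ℕ → ℝ} (hε : Antitone ε) :
    (∑' i, (∫⁻ y in crossing x ξ R (ε (i + 1)) (ε i), ‖S.K ξ y * f y‖ₑ) ^ r) ^ (1 / r) ≤
      ENNReal.ofReal S.Cst * 2 ^ d * crossingConst (volume : Measure (Rd d)) r * m ^ (1 / r) := by
  have hr₀ : 0 < r := by linarith
  have : Nonempty (Fin d) := ⟨⟨0, hd⟩⟩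
  set c := ENNReal.ofReal S.Cst * 2 ^ d
  have hterm (i : ℕ) : ∫⁻ y in crossing x ξ R (ε (i + 1)) (ε i), ‖S.K ξ y * f y‖ₑ ≤
      c * ∫⁻ y in crossing x ξ R (ε (i + 1)) (ε i), edist x y ^ (-d : ℝ) * ‖f y‖ₑ := by
    rw [← lintegral_const_mul' _ _ (by finiteness)]
    refine setLIntegral_mono' (measurableSet_crossing ..) fun y hy => ?_
    rw [enorm_mul, ← mul_assoc]
    gcongr
    exact S.enorm_K_le_of_two_mul_dist_le (hR.trans hy.1) (hξ.trans (le_of_lt hy.1))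
  have hcross := rpow_tsum_setLIntegral_crossing_le hr hf.enorm
    (by simpa using hgrowth) hR hξ hε
  rw [finrank_euclideanSpace_fin] at hcross
  calc _ ≤ (∑' i, (c * ∫⁻ y in crossing x ξ R (ε (i + 1)) (ε i),
          edist x y ^ (-d : ℝ) * ‖f y‖ₑ) ^ r) ^ (1 / r) := by gcongr with i; exact hterm i
    _ = c * (∑' i, (∫⁻ y in crossing x ξ R (ε (i + 1)) (ε i),
          edist x y ^ (-d : ℝ) * ‖f y‖ₑ) ^ r) ^ (1 / r) := by
        simp_rw [ENNReal.mul_rpow_of_nonneg _ _ hr₀.le]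
        rw [ENNReal.tsum_mul_left, ENNReal.mul_rpow_of_nonneg _ _ (by positivity), one_div,
          ENNReal.rpow_rpow_inv hr₀.ne']
    _ ≤ _ := by rw [mul_assoc c]; gcongr

end CZO

namespace Cube

variable {d : ℕ} {Q : Cube d} {x y : Rd d} {s t : ℝ}

lemma set_eq_dilate_one (Q : Cube d) : Q.set = Q.dilate 1 := by
  simp [Cube.set, Cube.dilate]

lemma measurableSet_dilate (Q : Cube d) (t : ℝ) : MeasurableSet (Q.dilate t) := by
  have hcoord (i : Fin d) :
      MeasurableSet {y : Rd d | Q.c i - t * Q.l / 2 ≤ y i ∧ y i < Q.c i + t * Q.l / 2} :=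
    (by fun_prop : Measurable fun y : Rd d => y i) measurableSet_Ico
  simpa only [Cube.dilate, ofPred_forall] using MeasurableSet.iInter hcoord

lemma mem_dilate_of_dist_le (hx : x ∈ Q.dilate s) (h : dist x y ≤ (t - s) / 2 * Q.l) :
    y ∈ Q.dilate t := by
  intro i
  have hcoord : |x i - y i| ≤ (t - s) / 2 * Q.l := by
    refine (PiLp.norm_apply_le (x - y) i).trans ?_
    rwa [← dist_eq_norm]
  rw [abs_le] at hcoord
  constructor <;> linarith [hx i]

lemma dist_le_of_mem_dilate (hst : 0 ≤ s + t) (hx : x ∈ Q.dilate s) (hy : y ∈ Q.dilate t) :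
    dist x y ≤ √d * ((s + t) / 2 * Q.l) := by
  have hl := Q.hl
  have hcoord (i : Fin d) : dist (x i) (y i) ≤ (s + t) / 2 * Q.l := by
    rw [Real.dist_eq, abs_le]; constructor <;> linarith [hx i, hy i]
  rw [EuclideanSpace.dist_eq]
  calc √(∑ i, dist (x i) (y i) ^ 2)
      ≤ √(∑ _ : Fin d, ((s + t) / 2 * Q.l) ^ 2) := by gcongr with i; exact hcoord i
    _ = √d * ((s + t) / 2 * Q.l) := by
        rw [Finset.sum_const, Finset.card_fin, nsmul_eq_mul, Real.sqrt_mul (by positivity),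
          Real.sqrt_sq (by positivity)]

end Cube

lemma ballGrowth_maxCube {d : ℕ} (g : Rd d → ℝ) (x : Rd d) :
    BallGrowth volume (fun y => ‖g y‖ₑ) x d (4 ^ d * maxCube g x) := by
  intro t ht
  let Q : Cube d := ⟨x, 4 * t, by positivity⟩
  have hx_half : x ∈ Q.dilate (1 / 2) := fun i => by constructor <;> simp only [Q] <;> linarith
  have hball : closedBall x t ⊆ Q.set := fun y hy => by
    rw [Q.set_eq_dilate_one]
    refine Cube.mem_dilate_of_dist_le hx_half ((mem_closedBall'.1 hy).trans ?_)
    simp only [Q]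
    linarith
  have hmax : Q.vol⁻¹ * ∫⁻ y in Q.set, ‖g y‖ₑ ≤ maxCube g x := by
    simp_rw [Real.enorm_eq_ofReal_abs]
    exact le_iSup₂ (f := fun (Q : Cube d) _ => Q.vol⁻¹ * ∫⁻ y in Q.set, ENNReal.ofReal |g y|) Q
      (hball (mem_closedBall_self ht.le))
  have hvol : Q.vol = ENNReal.ofReal t ^ (d : ℝ) * 4 ^ d := by
    rw [Cube.vol, show Q.l = t * 4 from mul_comm _ _, mul_pow, ENNReal.ofReal_mul (by positivity),
      ENNReal.ofReal_pow ht.le, ENNReal.ofReal_pow (by norm_num), ENNReal.ofReal_ofNat,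
      ENNReal.rpow_natCast]
  have hvol₀ : Q.vol ≠ 0 := by
    simpa [Cube.vol] using pow_pos Q.hl d
  calc ∫⁻ y in closedBall x t, ‖g y‖ₑ ≤ ∫⁻ y in Q.set, ‖g y‖ₑ := lintegral_mono_set hball
    _ = Q.vol * (Q.vol⁻¹ * ∫⁻ y in Q.set, ‖g y‖ₑ) := by
        rw [← mul_assoc, ENNReal.mul_inv_cancel hvol₀ ENNReal.ofReal_ne_top, one_mul]
    _ ≤ Q.vol * maxCube g x := by gcongr
    _ = _ := by rw [hvol, mul_assoc]

lemma ballGrowth_rpow_maxCube {d : ℕ} (f : Rd d → ℝ) {r : ℝ} (hr : 0 ≤ r) (x : Rd d) :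
    BallGrowth volume (fun y => ‖f y‖ₑ ^ r) x d (4 ^ d * maxCube (fun y => |f y| ^ r) x) := by
  have hpow (y : Rd d) : ‖|f y| ^ r‖ₑ = ‖f y‖ₑ ^ r := by
    rw [Real.enorm_eq_ofReal (by positivity), Real.enorm_eq_ofReal_abs,
      ENNReal.ofReal_rpow_of_nonneg (abs_nonneg _) hr]
  simpa only [hpow] using ballGrowth_maxCube (fun y => |f y| ^ r) x

namespace CZO

variable {d : ℕ} {S : CZO d} {f : Rd d → ℝ} {x ξ : Rd d} {ρ r R R₀ : ℝ}

lemma TruncIntegrable.trunc_indicator_sub_trunc_indicator (hf : S.TruncIntegrable f)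
    {H : Set (Rd d)} (hH : MeasurableSet H) (z : Rd d) {a b : ℝ} (ha : 0 < a) (hab : a ≤ b) :
    S.trunc a (H.indicator f) z - S.trunc b (H.indicator f) z =
      ∫ y in shell z a b ∩ H, S.K z y * f y := by
  rw [(hf.indicator hH).trunc_sub_trunc z ha hab, ← setIntegral_indicator hH]
  simp_rw [indicator_mul_right]

lemma TruncIntegrable.integrableOn_shell_of_two_mul_dist_le (hf : S.TruncIntegrable f)
    (hR : 0 < R) (hξ : 2 * dist x ξ ≤ R) :
    IntegrableOn (fun y => S.K ξ y * f y) (shell x R R₀) := by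
  refine (hf ξ (R / 2) (by positivity)).mono_set fun y hy => ?_
  have htriangle := dist_triangle x ξ y
  simp only [shell, mem_ofPred_eq] at hy ⊢
  linarith

lemma TruncIntegrable.var_indicator_le (hf : S.TruncIntegrable f) (hr : 1 ≤ r) (hrρ : r ≤ ρ)
    {H : Set (Rd d)} (hH : MeasurableSet H) (hGH : shell x R R₀ ⊆ H) (hR : 0 < R)
    (hξ : 2 * dist x ξ ≤ R) {B : ℝ≥0∞}
    (hB : ∀ ε : ℕ → ℝ, Antitone ε →
      (∑' i, (∫⁻ y in crossing x ξ R (ε (i + 1)) (ε i), ‖S.K ξ y * f y‖ₑ) ^ r) ^ (1 / r) ≤ B) :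
    S.var ρ (H.indicator f) ξ ≤ S.var ρ f x +
      ((∫⁻ y in H \ shell x R R₀, ‖S.K ξ y * f y‖ₑ) +
        (∫⁻ y in {y | R < dist x y}, ‖S.K ξ y * f y - S.K x y * f y‖ₑ) + B) := by
  have hG : MeasurableSet (shell x R R₀) := measurableSet_shell x R R₀
  have hG_subset : shell x R R₀ ⊆ {y | R < dist x y} := fun _ hy => hy.1
  refine iSup₂_le ?_
  rintro ε ⟨hε, hε₀, -⟩
  have hanti : Antitone ε := hε.antitone
  have hterm (i : ℕ) := enorm_setIntegral_inter_le (μ := volume)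
    (measurableSet_shell ξ (ε (i + 1)) (ε i)) (measurableSet_shell x (ε (i + 1)) (ε i)) hG hH hGH
    (hf.integrableOn_shell ξ (hε₀ _) _) (hf.integrableOn_shell_of_two_mul_dist_le hR hξ)
    (hf.integrableOn_shell x (hε₀ _) _)
  simp_rw [← Real.enorm_eq_ofReal_abs,
    hf.trunc_indicator_sub_trunc_indicator hH ξ (hε₀ _) (hanti (Nat.le_succ _))]
  refine (rpow_tsum_rpow_le_add_add hr hrρ hterm).trans (add_le_add
    (hf.rpow_tsum_shell_inter_shell_le_var (by linarith) hR hanti) (add_le_add ?_ ?_))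
  · rw [ENNReal.tsum_add]
    exact add_le_add (tsum_setLIntegral_shell_inter_le _ ξ hanti (hH.diff hG) _)
      ((tsum_setLIntegral_shell_inter_le _ x hanti hG _).trans (lintegral_mono_set hG_subset))
  · refine le_trans ?_ (hB ε hanti)
    gcongr with i
    exact inter_subset_inter_left _ hG_subset

variable (S) {m : ℝ≥0∞} {Q₀ Q : Cube d}

lemma setLIntegral_compl_dilate_inter_closedBall_le (hR : 0 < R)
    (hgrowth : BallGrowth volume (fun y => ‖f y‖ₑ) x d m) (hξ : ξ ∈ Q.dilate 1) :
    ∫⁻ y in (Q.dilate 3)ᶜ ∩ closedBall x R, ‖S.K ξ y * f y‖ₑ ≤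
      ENNReal.ofReal (S.Cst * (R / Q.l) ^ d) * m := by
  refine S.setLIntegral_enorm_K_mul_le
    ((Q.measurableSet_dilate 3).compl.inter measurableSet_closedBall) Q.hl hR
    inter_subset_right (fun y hy => ?_) hgrowth
  contrapose! hy
  exact fun h => h.1 (Cube.mem_dilate_of_dist_le hξ (by linarith))

lemma setLIntegral_dilate_inter_lt_dist_le (hd : 0 < d)
    (hgrowth : BallGrowth volume (fun y => ‖f y‖ₑ) x d m) (hx : x ∈ Q.dilate 1)
    (hξ : 2 * dist x ξ ≤ R) :
    ∫⁻ y in Q.dilate 3 ∩ {y | max R Q.l < dist x y}, ‖S.K ξ y * f y‖ₑ ≤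
      ENNReal.ofReal (S.Cst * (4 * √d) ^ d) * m := by
  have hl := Q.hl
  have hratio : 2 * √d * Q.l / (Q.l / 2) = 4 * √d := by field_simp; norm_num
  rw [← hratio]
  refine S.setLIntegral_enorm_K_mul_le
    ((Q.measurableSet_dilate 3).inter (measurableSet_lt_dist x _)) (by positivity) (by positivity)
    (fun y hy => mem_closedBall'.2 ?_) (fun y ⟨_, hy⟩ => ?_) hgrowth
  · linarith [Cube.dist_le_of_mem_dilate (by norm_num) hx hy.1]
  · rw [mem_ofPred_eq, max_lt_iff] at hy
    linarith [dist_triangle x ξ y]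

lemma setLIntegral_dilate_diff_diff_shell_le (hd : 0 < d)
    (hgrowth : BallGrowth volume (fun y => ‖f y‖ₑ) x d m)
    (hx₀ : x ∈ Q₀.dilate 1) (hx : x ∈ Q.dilate 1) (hξ : ξ ∈ Q.dilate 1) :
    ∫⁻ y in (Q₀.dilate 3 \ Q.dilate 3) \ shell x (2 * √d * Q.l) Q₀.l, ‖S.K ξ y * f y‖ₑ ≤
      2 * ENNReal.ofReal (S.Cst * (4 * √d) ^ d) * m := by
  set R := 2 * √d * Q.l with hRdef
  have hl := Q.hl
  have hR : 0 < R := by positivity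
  have hratio : R / Q.l ≤ 4 * √d := by
    rw [div_le_iff₀ hl, hRdef]
    gcongr
    norm_num
  have hxξ : 2 * dist x ξ ≤ R := by
    linarith [Cube.dist_le_of_mem_dilate (by norm_num) hx hξ]
  have hCst := S.hCst.le
  have hcover : (Q₀.dilate 3 \ Q.dilate 3) \ shell x R Q₀.l ⊆ ((Q.dilate 3)ᶜ ∩ closedBall x R) ∪
      (Q₀.dilate 3 ∩ {y | max R Q₀.l < dist x y}) := fun y ⟨hyH, hy⟩ => by
    by_cases hyR : R < dist x y
    · exact .inr ⟨hyH.1, max_lt hyR (not_le.1 fun h => hy ⟨hyR, h⟩)⟩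
    · exact .inl ⟨hyH.2, mem_closedBall'.2 (not_lt.1 hyR)⟩
  calc _ ≤ _ := (lintegral_mono_set hcover).trans (lintegral_union_le _ _ _)
    _ ≤ ENNReal.ofReal (S.Cst * (R / Q.l) ^ d) * m + ENNReal.ofReal (S.Cst * (4 * √d) ^ d) * m :=
        add_le_add (S.setLIntegral_compl_dilate_inter_closedBall_le hR hgrowth hξ)
          (S.setLIntegral_dilate_inter_lt_dist_le hd hgrowth hx₀ hxξ)
    _ ≤ ENNReal.ofReal (S.Cst * (4 * √d) ^ d) * m + ENNReal.ofReal (S.Cst * (4 * √d) ^ d) * m := by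
        gcongr
    _ = _ := by ring

lemma shell_subset_dilate_diff_dilate (hx₀ : x ∈ Q₀.dilate 1) (hx : x ∈ Q.dilate 1) :
    shell x (2 * √d * Q.l) Q₀.l ⊆ Q₀.dilate 3 \ Q.dilate 3 := fun y ⟨hR, hR₀⟩ =>
  ⟨Cube.mem_dilate_of_dist_le hx₀ (by linarith), fun hy => by
    linarith [Cube.dist_le_of_mem_dilate (by norm_num) hx hy]⟩

/-- The constant `C` in front of the maximal function. The first summand comes from the part of
`3Q₀ \ 3Q` outside a shell centred at `x` and from the oscillation of the kernel, where only
averages of `|f|` enter; the second one comes from the crossings. -/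
def grandMaxConst (r : ℝ) : ℝ≥0∞ :=
  (2 * ENNReal.ofReal (S.Cst * (4 * √d) ^ d) + ENNReal.ofReal S.Cst * 2 ^ d * S.diniSum) *
      (volume (ball (0 : Rd d) 1) ^ (r - 1) * 4 ^ d) ^ (1 / r) +
    ENNReal.ofReal S.Cst * 2 ^ d * crossingConst (volume : Measure (Rd d)) r * (4 ^ d) ^ (1 / r)

lemma grandMaxConst_ne_top (hr : 1 < r) : S.grandMaxConst r ≠ ⊤ := by
  have hcross := crossingConst_ne_top (μ := (volume : Measure (Rd d))) hr
  have hdini := S.diniSum_ne_top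
  have hball : volume (ball (0 : Rd d) 1) ≠ ⊤ := measure_ball_lt_top.ne
  have hball_rpow : volume (ball (0 : Rd d) 1) ^ (r - 1) ≠ ⊤ :=
    ENNReal.rpow_ne_top_of_nonneg (by linarith) hball
  have hr₀ : 0 ≤ 1 / r := by positivity
  unfold grandMaxConst
  finiteness

variable {S}

lemma TruncIntegrable.var_indicator_dilate_diff_le (hS : S.TruncIntegrable f) (hd : 0 < d)
    (hf : AEMeasurable f) (hr : 1 < r) (hrρ : r ≤ ρ)
    (hx₀ : x ∈ Q₀.set) (hx : x ∈ Q.set) (hξ : ξ ∈ Q.set) :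
    S.var ρ ((Q₀.dilate 3 \ Q.dilate 3).indicator f) ξ ≤
      S.var ρ f x + S.grandMaxConst r * maxCube (fun y => |f y| ^ r) x ^ (1 / r) := by
  rw [Cube.set_eq_dilate_one] at hx₀ hx hξ
  have hr₀ : 0 ≤ 1 / r := by positivity
  have hl := Q.hl
  set R := 2 * √d * Q.l
  have hR : 0 < R := by positivity
  have hxξ : 2 * dist x ξ ≤ R := by
    linarith [Cube.dist_le_of_mem_dilate (by norm_num) hx hξ]
  have hgrowth_rpow := ballGrowth_rpow_maxCube f (zero_le_one.trans hr.le) x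
  have hgrowth_one := ballGrowth_one (volume : Measure (Rd d)) x
  rw [finrank_euclideanSpace_fin] at hgrowth_one
  have hgrowth := BallGrowth.of_rpow hr hf.enorm hgrowth_one hgrowth_rpow
  refine (hS.var_indicator_le hr.le hrρ
    ((Q₀.measurableSet_dilate 3).diff (Q.measurableSet_dilate 3))
    (shell_subset_dilate_diff_dilate hx₀ hx) hR hxξ fun ε hε =>
      S.rpow_tsum_setLIntegral_crossing_enorm_K_mul_le hd hr hf hgrowth_rpow hR hxξ hε).trans ?_
  gcongr
  refine (add_le_add_left (add_le_add
    (S.setLIntegral_dilate_diff_diff_shell_le hd hgrowth hx₀ hx hξ)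
    (S.setLIntegral_enorm_K_sub_mul_le hR hxξ hgrowth)) _).trans_eq ?_
  simp only [grandMaxConst, ENNReal.mul_rpow_of_nonneg _ _ hr₀]
  ring

end CZO

theorem grandMaxLoc_pointwise_bound_general {d : ℕ} (hd : 0 < d) (S : CZO d) {ρ r : ℝ}
    (hr : 1 < r) (hrρ : r ≤ ρ) :
    ∃ C : ℝ, 0 < C ∧ ∀ (Q₀ : Cube d) (f : Rd d → ℝ), AEMeasurable f → S.TruncIntegrable f →
      ∀ x, S.grandMaxLoc ρ Q₀ f x ≤
        ENNReal.ofReal C * maxCube (fun y => |f y| ^ r) x ^ (1 / r) + S.var ρ f x := by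
  refine ⟨(S.grandMaxConst r).toReal + 1, by positivity, fun Q₀ f hf hS x => ?_⟩
  have hconst : S.grandMaxConst r ≤ ENNReal.ofReal ((S.grandMaxConst r).toReal + 1) := by
    rw [ENNReal.le_ofReal_iff_toReal_le (S.grandMaxConst_ne_top hr) (by positivity)]
    linarith
  rw [add_comm]
  unfold CZO.grandMaxLoc
  split_ifs with hx₀
  · refine iSup₂_le fun Q hQ => essSup_le_of_ae_le _ ?_
    filter_upwards [ae_restrict_mem (by simpa [Q.set_eq_dilate_one] using Q.measurableSet_dilate 1)]
      with ξ hξ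
    exact (hS.var_indicator_dilate_diff_le hd hf hr hrρ hx₀ hQ.1 hξ).trans (by gcongr)
  · exact zero_le

/-- Pointwise bound of the local grand maximal truncated operator by the
Hardy–Littlewood maximal function and the variation, with constant independent of `Q₀`. -/
theorem grandMaxLoc_pointwise_bound
    (d : ℕ) (hd : 0 < d) (S : CZO d) (ρ q : ℝ) (hρ : 2 < ρ) (hq : 1 < q)
    (hbdd : S.VarBdd ρ q) (r : ℝ) (hr : 1 < r) (hrq : r < q) (hrρ : r < ρ) :
    ∃ C : ℝ, 0 < C ∧ ∀ (Q₀ : Cube d) (f : Rd d → ℝ), Measurable f →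
      (∫⁻ x, ENNReal.ofReal |f x| ^ q ∂volume) ≠ ⊤ →
      ∀ᵐ x ∂(volume : Measure (Rd d)), x ∈ Q₀.set →
        S.grandMaxLoc ρ Q₀ f x ≤
          ENNReal.ofReal C * maxCube (fun y => |f y| ^ r) x ^ (1 / r) + S.var ρ f x := by
  obtain ⟨C, hC, hbound⟩ := grandMaxLoc_pointwise_bound_general hd S hr hrρ.le
  refine ⟨C, hC, fun Q₀ f hf hfq => .of_forall fun x _ => hbound Q₀ f hf.aemeasurable ?_ x⟩
  exact S.truncIntegrable_of_lintegral_rpow_ne_top hd hq hf.aemeasurable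
    (by simpa only [Real.enorm_eq_ofReal_abs] using hfq)
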